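/- arXiv:1706.03631 — 4 statements merged into one kernel-verified Lean document; each statement's English description precedes it below -/
import Mathlib

section
/- Let m ≥ 1 and let T : (Fin m → Fin 2) → ℂ be a symmetric tensor, i.e. T(i) = T(i∘σ) for every permutation σ of Fin m. Then T is a Hankel tensor and rank_S(T) = rank_V(T). -/
open scoped BigOperators
open MvPolynomial

noncomputable section

/-- An order-`m`, dimension-`n` complex tensor. -/
abbrev Tensor (m n : ℕ) := (Fin m → Fin n) → ℂ

/-- Tensors expressible as a sum of `r` rank-one tensors. -/
def cpSet (m n r : ℕ) : Set (Tensor m n) :=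
  {T | ∃ u : Fin r → Fin m → Fin n → ℂ, ∀ i, T i = ∑ k, ∏ j, u k j (i j)}

/-- Tensors expressible as a sum of `r` symmetric rank-one tensors. -/
def symSet (m n r : ℕ) : Set (Tensor m n) :=
  {T | ∃ v : Fin r → Fin n → ℂ, ∀ i, T i = ∑ k, ∏ j, v k (i j)}

/-- The Vandermonde vector `v(a,b) ∈ ℂ^n`, `v(a,b)_i = a^(n-1-i) * b^i`. -/
def vand (n : ℕ) (a b : ℂ) : Fin n → ℂ := fun i => a ^ (n - 1 - (i : ℕ)) * b ^ (i : ℕ)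

/-- Tensors expressible as a sum of `r` Vandermonde rank-one tensors. -/
def vandSet (m n r : ℕ) : Set (Tensor m n) :=
  {T | ∃ ab : Fin r → ℂ × ℂ, ∀ i, T i = ∑ k, ∏ j, vand n (ab k).1 (ab k).2 (i j)}

/-- The cp rank of a tensor. -/
def cpRank {m n : ℕ} (T : Tensor m n) : ℕ := sInf {r | T ∈ cpSet m n r}

/-- The symmetric rank of a tensor. -/
def symRank {m n : ℕ} (T : Tensor m n) : ℕ := sInf {r | T ∈ symSet m n r}

/-- The Vandermonde rank of a tensor. -/
def vandRank {m n : ℕ} (T : Tensor m n) : ℕ := sInf {r | T ∈ vandSet m n r}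

/-- The border rank of a tensor (closure in the product topology). -/
def brank {m n : ℕ} (T : Tensor m n) : ℕ := sInf {r | T ∈ closure (cpSet m n r)}

/-- The symmetric border rank of a tensor. -/
def bSymRank {m n : ℕ} (T : Tensor m n) : ℕ := sInf {r | T ∈ closure (symSet m n r)}

/-- The border Vandermonde rank of a tensor. -/
def bVandRank {m n : ℕ} (T : Tensor m n) : ℕ := sInf {r | T ∈ closure (vandSet m n r)}

/-- `T` is the Hankel tensor with parameter vector `h ∈ ℂ^{(n-1)m+1}`. -/
def IsHankel {m n : ℕ} (T : Tensor m n) (h : Fin ((n - 1) * m + 1) → ℂ) : Prop :=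
  ∀ i : Fin m → Fin n, T i = h ⟨∑ j, (i j : ℕ), by
    have h1 : ∑ j, (i j : ℕ) ≤ ∑ _j : Fin m, (n - 1) :=
      Finset.sum_le_sum fun j _ => Nat.le_pred_of_lt (i j).isLt
    simp only [Finset.sum_const, Finset.card_univ, Fintype.card_fin, smul_eq_mul] at h1
    exact Nat.lt_succ_of_le (h1.trans (le_of_eq (Nat.mul_comm m (n - 1))))⟩

/-- The `(d-r+1) × (r+1)` Hankel (catalecticant) matrix `C_{d-r,r}(h)` of `h ∈ ℂ^{d+1}`. -/
def hMat (d r : ℕ) (h : Fin (d + 1) → ℂ) : Matrix (Fin (d - r + 1)) (Fin (r + 1)) ℂ :=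
  Matrix.of fun i j => if hij : (i : ℕ) + (j : ℕ) < d + 1 then h ⟨(i : ℕ) + (j : ℕ), hij⟩ else 0

/-- The binary form `f(x,y) = f_0 x^r + f_1 x^(r-1) y + ⋯ + f_r y^r`. -/
def binForm (r : ℕ) (f : Fin (r + 1) → ℂ) : MvPolynomial (Fin 2) ℂ :=
  ∑ j : Fin (r + 1), C (f j) * X 0 ^ (r - (j : ℕ)) * X 1 ^ (j : ℕ)

/-- The binary form `h(x,y) = ∑_j binom(d,j) h_j x^j y^(d-j)` associated with `h ∈ ℂ^{d+1}`. -/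
def assocForm (d : ℕ) (h : Fin (d + 1) → ℂ) : MvPolynomial (Fin 2) ℂ :=
  ∑ j : Fin (d + 1), C ((d.choose (j : ℕ) : ℂ) * h j) * X 0 ^ (j : ℕ) * X 1 ^ (d - (j : ℕ))

/-- Parameter vectors of binary forms of Waring rank at most `r`. -/
def waringSet (d r : ℕ) : Set (Fin (d + 1) → ℂ) :=
  {h | ∃ ab : Fin r → ℂ × ℂ,
    assocForm d h = ∑ i, (C (ab i).1 * X 0 + C (ab i).2 * X 1) ^ d}

/-- The Waring rank of the binary form associated with `h`. -/
def waringRank (d : ℕ) (h : Fin (d + 1) → ℂ) : ℕ := sInf {r | h ∈ waringSet d r}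

/-- The border Waring rank of the binary form associated with `h`. -/
def bWaringRank (d : ℕ) (h : Fin (d + 1) → ℂ) : ℕ := sInf {r | h ∈ closure (waringSet d r)}

/-- Binary multi-indices with the same entry sum differ by a permutation of the positions. -/
theorem exists_perm_comp_eq_of_sum_eq {m : ℕ} {i i' : Fin m → Fin 2}
    (h : ∑ j, (i j : ℕ) = ∑ j, (i' j : ℕ)) : ∃ σ : Equiv.Perm (Fin m), i' ∘ σ = i := by
  have sum_eq_card : ∀ f : Fin m → Fin 2, ∑ j, (f j : ℕ) = Fintype.card {j // f j = 1} := by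
    intro f
    rw [Fintype.card_subtype, Finset.card_filter]
    refine Finset.sum_congr rfl fun j _ => ?_
    generalize f j = x
    fin_cases x <;> rfl
  rw [sum_eq_card, sum_eq_card] at h
  let e : {j // i j = 1} ≃ {j // i' j = 1} := Fintype.equivOfCardEq h
  refine ⟨e.extendSubtype, funext fun j => ?_⟩
  by_cases hj : i j = 1
  · exact (e.extendSubtype_mem j hj).trans hj.symm
  · have hj' : i' (e.extendSubtype j) ≠ 1 := e.extendSubtype_not_mem j hj
    simp only [Function.comp_apply]
    omega

/-- A symmetric tensor of dimension 2 is Hankel. -/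
theorem exists_isHankel_of_symmetric {m : ℕ} {T : Tensor m 2}
    (hsym : ∀ (σ : Equiv.Perm (Fin m)) (i : Fin m → Fin 2), T (i ∘ σ) = T i) :
    ∃ h : Fin ((2 - 1) * m + 1) → ℂ, IsHankel T h := by
  classical
  refine ⟨fun k => if hk : ∃ i : Fin m → Fin 2, ∑ j, (i j : ℕ) = k then T hk.choose else 0,
    fun i => ?_⟩
  have hk : ∃ i' : Fin m → Fin 2, ∑ j, (i' j : ℕ) = ∑ j, (i j : ℕ) := ⟨i, rfl⟩
  obtain ⟨σ, hσ⟩ := exists_perm_comp_eq_of_sum_eq hk.choose_spec.symm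
  beta_reduce
  rw [dif_pos hk, ← hsym σ hk.choose, hσ]

/-- Every vector of `ℂ²` is a Vandermonde vector. -/
theorem vand_two (v : Fin 2 → ℂ) : vand 2 (v 0) (v 1) = v := by
  funext i
  fin_cases i <;> simp [vand]

theorem symSet_two (m r : ℕ) : symSet m 2 r = vandSet m 2 r := by
  ext T
  constructor
  · rintro ⟨v, hv⟩
    exact ⟨fun k => (v k 0, v k 1), by simpa only [vand_two] using hv⟩
  · rintro ⟨ab, hab⟩
    exact ⟨fun k => vand 2 (ab k).1 (ab k).2, hab⟩

/-- A symmetric tensor of dimension 2 is Hankel and its symmetric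
rank equals its Vandermonde rank. -/
theorem stmt_1 (m : ℕ) (hm : 1 ≤ m) (T : Tensor m 2)
    (hsym : ∀ (σ : Equiv.Perm (Fin m)) (i : Fin m → Fin 2), T (i ∘ σ) = T i) :
    (∃ h : Fin ((2 - 1) * m + 1) → ℂ, IsHankel T h) ∧ symRank T = vandRank T := by
  exact ⟨exists_isHankel_of_symmetric hsym, by simp only [symRank, vandRank, symSet_two]⟩
end
end

section
/- Let m ≥ 1, n ≥ 2, 1 ≤ r ≤ n+2, and let u_1, …, u_r ∈ ℂ^n be in general linear position, i.e. every subset of them of cardinality at most n is linearly independent. Define the symmetric tensor S by S(i) = Σ_{j=1}^r ∏_{t=1}^m u_j(i_t). Then there exists an invertible matrix G ∈ GL_n(ℂ) such that the tensor G·S defined by (G·S)(i) = Σ_{j=1}^r ∏_{t=1}^m (G u_j)(i_t) is a Hankel tensor with rank_V(G·S) ≤ r; moreover, if rank_S(S) = r, then rank_V(G·S) = rank_S(S). -/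
open scoped BigOperators
open MvPolynomial

noncomputable section

/-- Over `ℂ`, every multiple of a Vandermonde vector of dimension at least two is again a
Vandermonde vector. -/
lemma exists_smul_vand_eq_vand {n : ℕ} (hn : 2 ≤ n) (c a b : ℂ) :
    ∃ a' b', c • vand n a b = vand n a' b' := by
  obtain ⟨z, hz⟩ := IsAlgClosed.exists_pow_nat_eq c (show 0 < n - 1 by omega)
  refine ⟨z * a, z * b, funext fun i => ?_⟩
  have hi : n - 1 = (n - 1 - (i : ℕ)) + i := by omega
  have hz' : z ^ (n - 1 - (i : ℕ)) * z ^ (i : ℕ) = c := by rw [← pow_add, ← hi, hz]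
  simp only [vand, Pi.smul_apply, smul_eq_mul, mul_pow, ← hz']
  ring

/-- Distinct nodes admit nowhere vanishing weights annihilating the powers below `n - 1`. -/
lemma exists_weights_sum_mul_pow_eq_zero {n : ℕ} {t : Fin n → ℂ} (ht : Function.Injective t) :
    ∃ w : Fin n → ℂ, (∀ i, w i ≠ 0) ∧ ∀ k, k + 1 < n → ∑ i, w i * t i ^ k = 0 := by
  refine ⟨fun i => (∏ j ∈ Finset.univ.erase i, (t i - t j))⁻¹, fun i => ?_, fun k hk => ?_⟩
  · refine inv_ne_zero (Finset.prod_ne_zero_iff.2 fun j hj => sub_ne_zero.2 fun h => ?_)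
    exact Finset.ne_of_mem_erase hj (ht h).symm
  · have h := Lagrange.coeff_eq_sum (s := Finset.univ) (v := t) ht.injOn
      (P := Polynomial.X ^ k) (by rw [Polynomial.degree_X_pow]; simp; omega)
    rw [Polynomial.coeff_X_pow, if_neg (by simp; omega)] at h
    simpa [div_eq_mul_inv, mul_comm] using h.symm

/-- A basis together with two further points, one with nonzero coordinates `p i` and the other
with coordinates `p i / t i` for distinct nonzero `t i`, can be moved onto the rational normal
curve by a base change. -/
lemma exists_mulVec_eq_vand_of_basis {n : ℕ} (hn : 2 ≤ n)
    (b : Module.Basis (Fin n) ℂ (Fin n → ℂ)) {p t : Fin n → ℂ} (hp : ∀ i, p i ≠ 0)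
    (ht : Function.Injective t) (ht0 : ∀ i, t i ≠ 0) :
    ∃ G : Matrix (Fin n) (Fin n) ℂ, IsUnit G.det ∧
      (∀ i, ∃ x y, G.mulVec (b i) = vand n x y) ∧
      (∃ x y, G.mulVec (∑ i, p i • b i) = vand n x y) ∧
      ∃ x y, G.mulVec (∑ i, (p i / t i) • b i) = vand n x y := by
  obtain ⟨w, hw0, hw⟩ := exists_weights_sum_mul_pow_eq_zero ht
  have hc : ∀ i, w i / p i ≠ 0 := fun i => div_ne_zero (hw0 i) (hp i)
  have hli : LinearIndependent ℂ (Matrix.vandermonde t).row := by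
    rw [Matrix.linearIndependent_rows_iff_isUnit, Matrix.isUnit_iff_isUnit_det, isUnit_iff_ne_zero]
    exact Matrix.det_vandermonde_ne_zero_iff.2 ht
  have hli' : LinearIndependent ℂ fun i => (w i / p i) • (Matrix.vandermonde t).row i :=
    hli.units_smul fun i => Units.mk0 _ (hc i)
  have : Nonempty (Fin n) := ⟨⟨0, by omega⟩⟩
  let d := basisOfLinearIndependentOfCardEqFinrank hli' (by simp)
  have hd : ∀ i, d i = (w i / p i) • vand n 1 (t i) := fun i => by
    simp only [d, coe_basisOfLinearIndependentOfCardEqFinrank]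
    ext k
    simp [vand, Matrix.vandermonde_apply]
  let L := b.equiv d (Equiv.refl _)
  have hL : ∀ x, (LinearMap.toMatrix' (L : (Fin n → ℂ) →ₗ[ℂ] (Fin n → ℂ))).mulVec x = L x :=
    fun x => by rw [LinearMap.toMatrix'_mulVec]; rfl
  have hLb : ∀ i, L (b i) = (w i / p i) • vand n 1 (t i) := fun i => by
    rw [← hd]; simp [L]
  refine ⟨LinearMap.toMatrix' (L : (Fin n → ℂ) →ₗ[ℂ] (Fin n → ℂ)), ?_, fun i => ?_, ?_, ?_⟩
  · rw [LinearMap.det_toMatrix']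
    exact L.isUnit_det'
  · rw [hL, hLb]
    exact exists_smul_vand_eq_vand hn _ _ _
  · obtain ⟨x, y, hxy⟩ := exists_smul_vand_eq_vand hn (∑ i, w i * t i ^ (n - 1)) 0 1
    refine ⟨x, y, ?_⟩
    rw [hL, ← hxy, map_sum]
    ext k
    have hk : ∀ i, p i * (w i / p i * t i ^ (k : ℕ)) = w i * t i ^ (k : ℕ) := fun i => by
      field_simp [hp i]
    simp only [map_smul, hLb, Finset.sum_apply, Pi.smul_apply, smul_eq_mul, vand, one_pow,
      one_mul, mul_one, hk]
    rcases Nat.lt_or_ge ((k : ℕ) + 1) n with h | h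
    · rw [hw _ h, zero_pow (by omega), mul_zero]
    · rw [show (k : ℕ) = n - 1 by omega]
      simp
  · obtain ⟨x, y, hxy⟩ := exists_smul_vand_eq_vand hn (∑ i, w i / t i) 1 0
    refine ⟨x, y, ?_⟩
    rw [hL, ← hxy, map_sum]
    ext k
    have hk : ∀ i, p i / t i * (w i / p i * t i ^ (k : ℕ)) = w i / t i * t i ^ (k : ℕ) :=
      fun i => by field_simp [hp i]
    simp only [map_smul, hLb, Finset.sum_apply, Pi.smul_apply, smul_eq_mul, vand, one_pow,
      one_mul, hk]
    rcases Nat.eq_zero_or_pos (k : ℕ) with h | h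
    · simp [h]
    · rw [zero_pow h.ne', mul_zero, ← hw ((k : ℕ) - 1) (by omega)]
      refine Finset.sum_congr rfl fun i _ => ?_
      nth_rewrite 1 [show (k : ℕ) = ((k : ℕ) - 1) + 1 by omega]
      rw [pow_succ]
      field_simp [ht0 i]

/-- A linearly independent family of at most `n` vectors in `ℂ^n` extends to a basis. -/
lemma exists_basis_extending {n r : ℕ} (hr : r ≤ n) {u : Fin r → Fin n → ℂ}
    (hu : LinearIndependent ℂ u) :
    ∃ b : Module.Basis (Fin n) ℂ (Fin n → ℂ), ∀ j, ∃ i, u j = b i := by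
  induction hr using Nat.decreasingInduction with
  | self =>
    rcases isEmpty_or_nonempty (Fin n) with h | h
    · exact ⟨Pi.basisFun ℂ (Fin n), fun j => h.elim j⟩
    · refine ⟨basisOfLinearIndependentOfCardEqFinrank hu (by simp), fun j => ⟨j, ?_⟩⟩
      rw [coe_basisOfLinearIndependentOfCardEqFinrank]
  | of_succ k hk ih =>
    obtain ⟨x, hx⟩ := exists_linearIndependent_snoc_of_lt_finrank hu (by simpa using hk)
    obtain ⟨b, hb⟩ := ih hx
    refine ⟨b, fun j => ?_⟩
    simpa using hb j.castSucc

/-- A linear relation among vectors in general linear position supported on at most `n` of them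
is trivial. -/
lemma eq_zero_of_sum_smul_eq_zero {n r : ℕ} {u : Fin r → Fin n → ℂ}
    (hgen : ∀ s : Finset (Fin r), s.card ≤ n →
      LinearIndependent ℂ (fun k : s => u (k : Fin r)))
    (z : Finset (Fin r)) (hz : r ≤ n + z.card) {c : Fin r → ℂ} (hc : ∀ k ∈ z, c k = 0)
    (h : ∑ k, c k • u k = 0) (k : Fin r) : c k = 0 := by
  by_cases hk : k ∈ z
  · exact hc k hk
  have hcard : zᶜ.card ≤ n := by
    rw [Finset.card_compl, Fintype.card_fin]
    omega
  refine Fintype.linearIndependent_iff.1 (hgen zᶜ hcard) (fun k => c k) ?_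
    ⟨k, Finset.mem_compl.2 hk⟩
  rw [Finset.sum_coe_sort zᶜ (fun k => c k • u k), ← h]
  refine Finset.sum_subset (Finset.subset_univ _) fun i _ hi => ?_
  rw [hc i (by simpa using hi), zero_smul]

/-- At most `n + 2` vectors of `ℂ^n` in general linear position can be moved onto the rational
normal curve by a base change. -/
lemma exists_mulVec_eq_vand {n r : ℕ} (hn : 2 ≤ n) (hr : r ≤ n + 2) (u : Fin r → Fin n → ℂ)
    (hgen : ∀ s : Finset (Fin r), s.card ≤ n →
      LinearIndependent ℂ (fun k : s => u (k : Fin r))) :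
    ∃ G : Matrix (Fin n) (Fin n) ℂ, IsUnit G.det ∧
      ∀ j, ∃ x y, G.mulVec (u j) = vand n x y := by
  have hcomp : ∀ {k : ℕ} (f : Fin k ↪ Fin r), k ≤ n → LinearIndependent ℂ (u ∘ f) :=
    fun f hk => (hgen (Finset.univ.map f) (by simpa using hk)).comp
      (fun i => ⟨f i, Finset.mem_map_of_mem f (Finset.mem_univ i)⟩)
      fun i j hij => f.injective (Subtype.ext_iff.1 hij)
  have : Nonempty (Fin n) := ⟨⟨0, by omega⟩⟩
  have hnode : Function.Injective fun i : Fin n => ((i : ℕ) + 1 : ℂ) := fun i j hij => by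
    simpa [Fin.ext_iff] using hij
  have hnode0 : ∀ i : Fin n, ((i : ℕ) + 1 : ℂ) ≠ 0 := fun i => Nat.cast_add_one_ne_zero _
  obtain hrn | rfl | rfl : r ≤ n ∨ r = n + 1 ∨ r = n + 2 := by omega
  · obtain ⟨b, hb⟩ := exists_basis_extending hrn (hcomp (Function.Embedding.refl _) hrn)
    obtain ⟨G, hG, hGb, -, -⟩ := exists_mulVec_eq_vand_of_basis hn b (p := fun _ => 1)
      (fun _ => one_ne_zero) hnode hnode0
    refine ⟨G, hG, fun j => ?_⟩
    obtain ⟨i, hi⟩ := hb j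
    rw [show u j = b i from hi]
    exact hGb i
  · let b := basisOfLinearIndependentOfCardEqFinrank (hcomp Fin.castSuccEmb le_rfl) (by simp)
    have hb : ∀ i, b i = u i.castSucc := fun i => by
      simp [b, coe_basisOfLinearIndependentOfCardEqFinrank]
    let p := b.repr (u (Fin.last n))
    have hpsum : ∑ i, p i • b i = u (Fin.last n) := b.sum_repr _
    have hp : ∀ i, p i ≠ 0 := fun i hi => by
      have := eq_zero_of_sum_smul_eq_zero hgen {i.castSucc} (by simp)
        (c := Fin.snoc (fun i => p i) (-1)) (by simpa using hi)
        (by simp [Fin.sum_univ_castSucc, ← hb, hpsum]) (Fin.last n)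
      simp at this
    obtain ⟨G, hG, hGb, hGp, -⟩ := exists_mulVec_eq_vand_of_basis hn b hp hnode hnode0
    refine ⟨G, hG, Fin.lastCases ?_ fun i => ?_⟩
    · rwa [← hpsum]
    · rw [← hb]
      exact hGb i
  · let b := basisOfLinearIndependentOfCardEqFinrank
      (hcomp (Fin.castSuccEmb.trans Fin.castSuccEmb) le_rfl) (by simp)
    have hb : ∀ i, b i = u i.castSucc.castSucc := fun i => by
      simp [b, coe_basisOfLinearIndependentOfCardEqFinrank]
    let p := b.repr (u (Fin.last n).castSucc)
    let q := b.repr (u (Fin.last (n + 1)))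
    have hpsum : ∑ i, p i • b i = u (Fin.last n).castSucc := b.sum_repr _
    have hqsum : ∑ i, q i • b i = u (Fin.last (n + 1)) := b.sum_repr _
    let c (x y : ℂ) : Fin (n + 2) → ℂ :=
      Fin.snoc (Fin.snoc (fun i => x * p i + y * q i) (-x) : Fin (n + 1) → ℂ) (-y)
    have hc : ∀ x y, ∑ k, c x y k • u k = 0 := fun x y => by
      simp only [c, Fin.sum_univ_castSucc, Fin.snoc_castSucc, Fin.snoc_last, ← hb, ← hpsum,
        ← hqsum, Finset.smul_sum, ← Finset.sum_add_distrib, smul_smul]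
      refine Finset.sum_eq_zero fun i _ => ?_
      module
    have hp : ∀ i, p i ≠ 0 := fun i hi => by
      have := eq_zero_of_sum_smul_eq_zero hgen {i.castSucc.castSucc, Fin.last (n + 1)}
        (by rw [Finset.card_pair (Fin.castSucc_lt_last _).ne]) (c := c 1 0)
        (by simp [c, hi]) (hc 1 0) (Fin.last n).castSucc
      simp [c] at this
    have hq : ∀ i, q i ≠ 0 := fun i hi => by
      have := eq_zero_of_sum_smul_eq_zero hgen {i.castSucc.castSucc, (Fin.last n).castSucc}
        (by rw [Finset.card_pair (by simp)]) (c := c 0 1)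
        (by simp [c, hi]) (hc 0 1) (Fin.last (n + 1))
      simp [c] at this
    have ht : Function.Injective fun i => p i / q i := fun i j hij => by
      by_contra hne
      have hij' : p i * q j = p j * q i := (div_eq_div_iff (hq i) (hq j)).1 hij
      have := eq_zero_of_sum_smul_eq_zero hgen {i.castSucc.castSucc, j.castSucc.castSucc}
        (by rw [Finset.card_pair (by simpa using hne)]) (c := c (q i) (-p i))
        (by
          simp only [Finset.mem_insert, Finset.mem_singleton, forall_eq_or_imp, forall_eq, c,
            Fin.snoc_castSucc]
          exact ⟨by ring, by linear_combination -hij'⟩)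
        (hc _ _) (Fin.last n).castSucc
      simp [c, hq] at this
    obtain ⟨G, hG, hGb, hGp, hGq⟩ := exists_mulVec_eq_vand_of_basis hn b hp ht
      fun i => div_ne_zero (hp i) (hq i)
    have hdiv : ∀ i, p i / (p i / q i) = q i := fun i => by
      field_simp [hp i, hq i]
    simp only [hdiv, hqsum] at hGq
    rw [hpsum] at hGp
    refine ⟨G, hG, Fin.lastCases hGq (Fin.lastCases hGp fun i => ?_)⟩
    rw [← hb]
    exact hGb i

/-- The multilinear action of a matrix on a rank-one tensor. -/
lemma sum_prod_mul_prod_eq_prod_mulVec {m n : ℕ} (A : Matrix (Fin n) (Fin n) ℂ) (v : Fin n → ℂ)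
    (i : Fin m → Fin n) :
    ∑ l : Fin m → Fin n, (∏ t, A (i t) (l t)) * ∏ t, v (l t) = ∏ t, A.mulVec v (i t) := by
  simp only [Matrix.mulVec, dotProduct, Finset.prod_univ_sum, Fintype.piFinset_univ,
    Finset.prod_mul_distrib]

/-- If an invertible base change of `∑ j, (u j)^{⊗m}` has a symmetric decomposition with `k` terms,
then so does the original tensor. -/
lemma mem_symSet_of_mulVec_mem_symSet {m n r k : ℕ} {G : Matrix (Fin n) (Fin n) ℂ}
    (hG : IsUnit G.det) {u : Fin r → Fin n → ℂ} {S GS : Tensor m n}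
    (hS : ∀ i, S i = ∑ j, ∏ t, u j (i t))
    (hGS : ∀ i, GS i = ∑ j, ∏ t, G.mulVec (u j) (i t)) (h : GS ∈ symSet m n k) :
    S ∈ symSet m n k := by
  obtain ⟨v, hv⟩ := h
  refine ⟨fun j => G⁻¹.mulVec (v j), fun i => ?_⟩
  have key : ∀ {s : ℕ} (x : Fin s → Fin n → ℂ), (∀ l, GS l = ∑ j, ∏ t, x j (l t)) →
      ∑ l, (∏ t, G⁻¹ (i t) (l t)) * GS l = ∑ j, ∏ t, G⁻¹.mulVec (x j) (i t) := fun x hx => by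
    simp only [hx, Finset.mul_sum]
    rw [Finset.sum_comm]
    simp only [sum_prod_mul_prod_eq_prod_mulVec]
  rw [← key v hv, key _ hGS, hS]
  simp [Matrix.mulVec_mulVec, Matrix.nonsing_inv_mul G hG]

/-- Sums of Vandermonde rank-one tensors are Hankel. -/
lemma exists_isHankel_of_mem_vandSet {m n r : ℕ} {T : Tensor m n} (h : T ∈ vandSet m n r) :
    ∃ h : Fin ((n - 1) * m + 1) → ℂ, IsHankel T h := by
  obtain ⟨ab, hab⟩ := h
  refine ⟨fun s => ∑ k, (ab k).1 ^ ((n - 1) * m - (s : ℕ)) * (ab k).2 ^ (s : ℕ), fun i => ?_⟩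
  rw [hab]
  refine Finset.sum_congr rfl fun k _ => ?_
  have hsum : ∑ j, (n - 1 - (i j : ℕ)) = (n - 1) * m - ∑ j, (i j : ℕ) := by
    rw [Finset.sum_tsub_distrib _ fun j _ => (show (i j : ℕ) ≤ n - 1 by omega)]
    simp [mul_comm]
  simp only [vand, Finset.prod_mul_distrib, Finset.prod_pow_eq_pow_sum, hsum]

/-- A symmetric tensor that is a sum of `r ≤ n+2` symmetric rank-one terms
with vectors in general linear position becomes Hankel after a base change. -/
theorem stmt_2 (m n r : ℕ) (hm : 1 ≤ m) (hn : 2 ≤ n) (hr1 : 1 ≤ r) (hr2 : r ≤ n + 2)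
    (u : Fin r → Fin n → ℂ)
    (hgen : ∀ s : Finset (Fin r), s.card ≤ n →
      LinearIndependent ℂ (fun k : s => u (k : Fin r)))
    (S : Tensor m n) (hS : ∀ i, S i = ∑ j, ∏ t, u j (i t)) :
    ∃ G : Matrix (Fin n) (Fin n) ℂ, IsUnit G.det ∧
      ∀ GS : Tensor m n, (∀ i, GS i = ∑ j, ∏ t, G.mulVec (u j) (i t)) →
        (∃ h : Fin ((n - 1) * m + 1) → ℂ, IsHankel GS h) ∧
        vandRank GS ≤ r ∧
        (symRank S = r → vandRank GS = symRank S) := by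
  obtain ⟨G, hG, hGu⟩ := exists_mulVec_eq_vand hn hr2 u hgen
  choose x y hxy using hGu
  refine ⟨G, hG, fun GS hGS => ?_⟩
  have hmem : GS ∈ vandSet m n r :=
    ⟨fun j => (x j, y j), fun i => by simp only [hGS, hxy]⟩
  have hle : vandRank GS ≤ r := Nat.sInf_le hmem
  refine ⟨exists_isHankel_of_mem_vandSet hmem, hle, fun hrank => le_antisymm (hrank ▸ hle) ?_⟩
  obtain ⟨ab, hab⟩ : GS ∈ vandSet m n (vandRank GS) :=
    Nat.sInf_mem (s := {k | GS ∈ vandSet m n k}) ⟨r, hmem⟩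
  exact Nat.sInf_le (mem_symSet_of_mulVec_mem_symSet hG hS hGS ⟨_, hab⟩)
end
end

section
/- Let n ≥ 2, m ≥ 1, and let H be a Hankel tensor of order m and dimension n with parameter vector h ∈ ℂ^{d+1}, d = (n−1)m. Then rank_V(H) = rank_S(h), the Waring rank of the associated binary form h(x,y). -/
open scoped BigOperators
open MvPolynomial

noncomputable section

theorem exists_fin_sum_eq (N m s : ℕ) (hs : s ≤ N * m) :
    ∃ f : Fin m → Fin (N + 1), ∑ j, (f j : ℕ) = s := by
  induction m generalizing s with
  | zero => exact ⟨Fin.elim0, by simp at hs; simp [hs]⟩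
  | succ m ih =>
    rw [Nat.mul_succ] at hs
    obtain ⟨f, hf⟩ := ih (s - min s N) (by omega)
    refine ⟨Fin.cons ⟨min s N, by omega⟩ f, ?_⟩
    rw [Fin.sum_univ_succ]
    simp only [Fin.cons_zero, Fin.cons_succ, hf]
    omega

theorem coeff_assocForm (d : ℕ) (h : Fin (d + 1) → ℂ) (j : Fin (d + 1)) :
    coeff (Finsupp.single 0 (j : ℕ) + Finsupp.single 1 (d - (j : ℕ))) (assocForm d h)
      = (d.choose (j : ℕ) : ℂ) * h j := by
  rw [assocForm, coeff_sum, Finset.sum_eq_single j]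
  · rw [X_pow_eq_monomial, X_pow_eq_monomial, mul_assoc, monomial_mul, coeff_C_mul,
      coeff_monomial]
    simp
  · intro k _ hk
    rw [X_pow_eq_monomial, X_pow_eq_monomial, mul_assoc, monomial_mul, coeff_C_mul,
      coeff_monomial, if_neg, mul_zero]
    intro e
    have := DFunLike.congr_fun e 0
    simp at this
    exact hk (Fin.ext this)
  · simp

theorem assocForm_injective (d : ℕ) : Function.Injective (assocForm d) := by
  intro g h e
  ext j
  have hj := coeff_assocForm d g j
  rw [e, coeff_assocForm] at hj
  have hc : (d.choose (j : ℕ) : ℂ) ≠ 0 :=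
    Nat.cast_ne_zero.2 (Nat.choose_pos (Nat.le_of_lt_succ j.isLt)).ne'
  exact (mul_left_cancel₀ hc hj).symm

theorem sum_linear_pow_eq_assocForm (d r : ℕ) (ab : Fin r → ℂ × ℂ) :
    ∑ i, (C (ab i).1 * X 0 + C (ab i).2 * X 1 : MvPolynomial (Fin 2) ℂ) ^ d
      = assocForm d fun j => ∑ i, (ab i).1 ^ (j : ℕ) * (ab i).2 ^ (d - (j : ℕ)) := by
  simp only [assocForm, add_pow, ← Fin.sum_univ_eq_sum_range
    (fun k => (C (ab _).1 * X 0 : MvPolynomial (Fin 2) ℂ) ^ k * (C (ab _).2 * X 1) ^ (d - k)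
      * (d.choose k : MvPolynomial (Fin 2) ℂ)) (d + 1)]
  rw [Finset.sum_comm]
  refine Finset.sum_congr rfl fun j _ => ?_
  simp only [map_mul, map_sum, map_pow, map_natCast, Finset.mul_sum, Finset.sum_mul]
  exact Finset.sum_congr rfl fun i _ => by ring

theorem mem_waringSet_iff (d r : ℕ) (h : Fin (d + 1) → ℂ) :
    h ∈ waringSet d r ↔ ∃ ab : Fin r → ℂ × ℂ,
      ∀ j, h j = ∑ i, (ab i).1 ^ (j : ℕ) * (ab i).2 ^ (d - (j : ℕ)) := by
  simp only [waringSet, Set.mem_ofPred_eq, sum_linear_pow_eq_assocForm,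
    (assocForm_injective d).eq_iff, funext_iff]

theorem prod_vand {m n : ℕ} (a b : ℂ) (i : Fin m → Fin n) :
    ∏ j, vand n a b (i j)
      = b ^ (∑ j, (i j : ℕ)) * a ^ ((n - 1) * m - ∑ j, (i j : ℕ)) := by
  have hle : ∀ j ∈ Finset.univ, (i j : ℕ) ≤ n - 1 := fun j _ => Nat.le_pred_of_lt (i j).isLt
  have hsum : ∑ j, (n - 1 - (i j : ℕ)) = (n - 1) * m - ∑ j, (i j : ℕ) := by
    rw [Finset.sum_tsub_distrib _ hle]
    simp [mul_comm]
  simp only [vand, Finset.prod_mul_distrib, Finset.prod_pow_eq_pow_sum, hsum, mul_comm]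

theorem IsHankel.mem_vandSet_iff {m n : ℕ} (hn : 1 ≤ n) {H : Tensor m n}
    {h : Fin ((n - 1) * m + 1) → ℂ} (hH : IsHankel H h) (r : ℕ) :
    H ∈ vandSet m n r ↔ h ∈ waringSet ((n - 1) * m) r := by
  rw [mem_waringSet_iff]
  constructor
  · rintro ⟨ab, hab⟩
    refine ⟨fun k => (ab k).swap, fun s => ?_⟩
    obtain ⟨N, rfl⟩ := Nat.exists_eq_add_of_le' hn
    obtain ⟨i, hi⟩ := exists_fin_sum_eq N m s (Nat.le_of_lt_succ s.isLt)
    have hs := hab i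
    rw [hH i] at hs
    simpa only [prod_vand, hi, Prod.fst_swap, Prod.snd_swap] using hs
  · rintro ⟨ab, hab⟩
    refine ⟨fun k => (ab k).swap, fun i => ?_⟩
    rw [hH i, hab]
    simp only [prod_vand, Prod.fst_swap, Prod.snd_swap]

/-- For a Hankel tensor `H` with parameter vector `h`,
`rank_V(H)` equals the Waring rank of the associated binary form of `h`. -/
theorem stmt_3 (n m : ℕ) (hn : 2 ≤ n) (hm : 1 ≤ m)
    (H : Tensor m n) (h : Fin ((n - 1) * m + 1) → ℂ) (hH : IsHankel H h) :
    vandRank H = waringRank ((n - 1) * m) h := by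
  simp only [vandRank, waringRank, hH.mem_vandSet_iff (by omega)]
end
end

section
/- Let n ≥ 2, m ≥ 1, and let H be a Hankel tensor of order m and dimension n with parameter vector h ∈ ℂ^{d+1}, d = (n−1)m. Let m₁ = ⌈m/2⌉ and let Flat(H) be the n^{m₁} × n^{m−m₁} catalecticant flattening matrix, indexed by I ∈ (Fin n)^{m₁} and J ∈ (Fin n)^{m−m₁}, with Flat(H)_{I,J} = H(I⌢J) (the entry of H at the concatenated index). Then rank Flat(H) = rank C_{d−l,l}(h), where l = (n−1)⌊m/2⌋. -/
open scoped BigOperators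
open MvPolynomial

noncomputable section

/-- Every `s ≤ (n - 1) * k` is the sum of some index `I ∈ (Fin n)^k`. -/
theorem exists_sum_val_eq {n : ℕ} (hn : 0 < n) (k s : ℕ) (hs : s ≤ (n - 1) * k) :
    ∃ I : Fin k → Fin n, ∑ j, (I j : ℕ) = s := by
  induction k generalizing s with
  | zero => exact ⟨Fin.elim0, by simp at hs ⊢; omega⟩
  | succ k ih =>
    rw [Nat.mul_succ] at hs
    obtain ⟨I, hI⟩ := ih (s - min s (n - 1)) (by omega)
    refine ⟨Fin.cons ⟨min s (n - 1), by omega⟩ I, ?_⟩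
    simp only [Fin.sum_univ_succ, Fin.cons_zero, Fin.cons_succ, hI]
    omega

theorem sum_val_le {n k : ℕ} (I : Fin k → Fin n) : ∑ j, (I j : ℕ) ≤ (n - 1) * k := by
  calc ∑ j, (I j : ℕ) ≤ ∑ _j : Fin k, (n - 1) :=
        Finset.sum_le_sum fun j _ => Nat.le_pred_of_lt (I j).isLt
    _ = (n - 1) * k := by simp [Nat.mul_comm]

/-- The sum of a concatenated index is the sum of its two parts. -/
theorem sum_val_concat {n m a b : ℕ} (hm : m = a + b) (I : Fin a → Fin n) (J : Fin b → Fin n) :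
    ∑ t : Fin m, ((if ht : (t : ℕ) < a then I ⟨t, ht⟩
      else J ⟨(t : ℕ) - a, by have := t.isLt; omega⟩ : Fin n) : ℕ)
      = ∑ j, (I j : ℕ) + ∑ j, (J j : ℕ) := by
  subst hm
  simp [Fin.sum_univ_add]

/-- Repeating rows and columns does not change the rank of a matrix. -/
theorem Matrix.rank_submatrix_of_surjective {R p q p' q' : Type*} [CommSemiring R]
    [StrongRankCondition R] [Fintype q] [Fintype q'] (A : Matrix p q R) {f : p' → p} {g : q' → q}
    (hf : f.Surjective) (hg : g.Surjective) : (A.submatrix f g).rank = A.rank := by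
  refine le_antisymm (A.rank_submatrix_le f g) ?_
  obtain ⟨f', hf'⟩ := hf.hasRightInverse
  obtain ⟨g', hg'⟩ := hg.hasRightInverse
  have hA : (A.submatrix f g).submatrix f' g' = A := by
    rw [Matrix.submatrix_submatrix, hf'.comp_eq_id, hg'.comp_eq_id, Matrix.submatrix_id_id]
  calc A.rank = ((A.submatrix f g).submatrix f' g').rank := by rw [hA]
    _ ≤ (A.submatrix f g).rank := Matrix.rank_submatrix_le _ f' g'

/-- The catalecticant flattening of a Hankel tensor has the same rank
as the Hankel matrix `C_{d-l,l}(h)`, `l = (n-1)⌊m/2⌋`. -/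
theorem stmt_7 (n m : ℕ) (hn : 2 ≤ n) (hm : 1 ≤ m)
    (H : Tensor m n) (h : Fin ((n - 1) * m + 1) → ℂ) (hH : IsHankel H h) :
    (Matrix.of fun (I : Fin ((m + 1) / 2) → Fin n) (J : Fin (m - (m + 1) / 2) → Fin n) =>
        H fun t => if ht : (t : ℕ) < (m + 1) / 2 then I ⟨t, ht⟩
          else J ⟨(t : ℕ) - (m + 1) / 2, by have := t.isLt; omega⟩).rank
      = (hMat ((n - 1) * m) ((n - 1) * (m / 2)) h).rank := by
  have hrow : (n - 1) * m - (n - 1) * (m / 2) = (n - 1) * ((m + 1) / 2) := by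
    rw [← Nat.mul_sub]
    congr 1
    omega
  have hcol : m - (m + 1) / 2 = m / 2 := by omega
  let f : (Fin ((m + 1) / 2) → Fin n) → Fin ((n - 1) * m - (n - 1) * (m / 2) + 1) :=
    fun I => ⟨∑ j, (I j : ℕ), by rw [hrow]; exact Nat.lt_succ_of_le (sum_val_le I)⟩
  let g : (Fin (m - (m + 1) / 2) → Fin n) → Fin ((n - 1) * (m / 2) + 1) :=
    fun J => ⟨∑ j, (J j : ℕ), by rw [← hcol]; exact Nat.lt_succ_of_le (sum_val_le J)⟩
  have hf : f.Surjective := fun s => by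
    obtain ⟨I, hI⟩ := exists_sum_val_eq (by omega : 0 < n) ((m + 1) / 2) s
      (by rw [← hrow]; exact Nat.le_of_lt_succ s.isLt)
    exact ⟨I, Fin.ext hI⟩
  have hg : g.Surjective := fun s => by
    obtain ⟨J, hJ⟩ := exists_sum_val_eq (by omega : 0 < n) (m - (m + 1) / 2) s
      (by rw [hcol]; exact Nat.le_of_lt_succ s.isLt)
    exact ⟨J, Fin.ext hJ⟩
  rw [← Matrix.rank_submatrix_of_surjective _ hf hg]
  congr 1
  ext I J
  have hsum := sum_val_concat (show m = (m + 1) / 2 + (m - (m + 1) / 2) by omega) I J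
  have hlt : ∑ j, (I j : ℕ) + ∑ j, (J j : ℕ) < (n - 1) * m + 1 :=
    hsum ▸ Nat.lt_succ_of_le (sum_val_le _)
  simp only [Matrix.of_apply, Matrix.submatrix_apply, hMat, f, g, dif_pos hlt]
  rw [hH]
  exact congrArg h (Fin.ext hsum)
end
end
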